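/- arXiv:2412.01397 — 6 statements merged into one kernel-verified Lean document; each statement's English description precedes it below -/
import Mathlib

section
/- Let d ≥ 1, let P ∈ S^d and let 0 < ε < π/2. Then the open ε-neighborhood of H(P) in the angular metric equals the union of the closed hemispheres centered at points of the open angular ε-ball around P; that is, {Q ∈ S^d : ∃ R ∈ H(P), arccos⟪Q,R⟫ < ε} = ⋃_{P₁ ∈ S^d, arccos⟪P,P₁⟫ < ε} H(P₁). -/
open scoped RealInnerProductSpace Pointwise

noncomputable section

/-- Euclidean space `ℝ^{d+1}`. -/
abbrev E (d : ℕ) : Type := EuclideanSpace ℝ (Fin (d + 1))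

/-- The unit sphere `S^d ⊆ ℝ^{d+1}`. -/
def sph (d : ℕ) : Set (E d) := {x | ‖x‖ = 1}

/-- The closed hemisphere `H(P)` centered at `P`. -/
def hemi {d : ℕ} (P : E d) : Set (E d) := {Q ∈ sph d | 0 ≤ ⟪P, Q⟫}

/-- The spherical polar set `W°`. -/
def polar {d : ℕ} (W : Set (E d)) : Set (E d) := {Q ∈ sph d | ∀ P ∈ W, 0 ≤ ⟪P, Q⟫}

/-- The semi-separation center set `𝒞(W₁, W₂)`. -/
def ssc {d : ℕ} (W₁ W₂ : Set (E d)) : Set (E d) :=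
  {P ∈ sph d | (∀ Q ∈ W₁, 0 ≤ ⟪P, Q⟫) ∧ ∀ R ∈ W₂, ⟪P, R⟫ ≤ 0}

/-- `W ⊆ S^d` is hemispherical if it misses some closed hemisphere. -/
def hemispherical {d : ℕ} (W : Set (E d)) : Prop := ∃ P ∈ sph d, W ∩ hemi P = ∅

/-- A hemispherical set is spherically convex if it contains the normalized segment
between any two of its points. -/
def sphConvex {d : ℕ} (W : Set (E d)) : Prop :=
  hemispherical W ∧ ∀ P ∈ W, ∀ Q ∈ W, ∀ t : ℝ, t ∈ Set.Icc (0 : ℝ) 1 →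
    (‖t • P + (1 - t) • Q‖)⁻¹ • (t • P + (1 - t) • Q) ∈ W

/-- The spherical convex hull `s-conv(W)`: normalized convex combinations of
finitely many points of `W`. -/
def sconv {d : ℕ} (W : Set (E d)) : Set (E d) :=
  {x | ∃ (n : ℕ) (P : Fin n → E d) (l : Fin n → ℝ),
    (∀ i, P i ∈ W) ∧ (∀ i, 0 ≤ l i) ∧ (∑ i, l i) = 1 ∧
    x = (‖∑ i, l i • P i‖)⁻¹ • (∑ i, l i • P i)}

/-- Reflecting in the bisector of two unit vectors `A`, `B` exchanges them. -/
theorem exists_sphere_swap {d : ℕ} (A B X : E d) (hA : A ∈ sph d) (hB : B ∈ sph d) (hX : X ∈ sph d) :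
    ∃ Y ∈ sph d, ⟪A, Y⟫ = ⟪B, X⟫ ∧ ⟪B, Y⟫ = ⟪A, X⟫ := by
  have hAB : ‖A‖ = ‖B‖ := Eq.trans hA (Eq.symm hB)
  have h1 := Submodule.reflection_sub hAB
  set f := (ℝ ∙ (A - B))ᗮ.reflection with hf
  have h2 : f B = A := by
    rw [← h1, hf, Submodule.reflection_reflection]
  refine ⟨f X, ?_, ?_, ?_⟩
  · exact (f.norm_map X).trans hX
  · conv_lhs => rw [← h2]
    exact f.inner_map_map B X
  · conv_lhs => rw [← h1]
    exact f.inner_map_map A X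

/-- The open ε-neighborhood of the hemisphere `H(P)` (angular metric) is the union of the
hemispheres centered at points of the open angular ε-ball around `P`. -/
theorem stmt_0 (d : ℕ) (hd : 1 ≤ d) (P : E d) (hP : P ∈ sph d)
    (ε : ℝ) (hε : 0 < ε) (hε' : ε < Real.pi / 2) :
    {Q ∈ sph d | ∃ R ∈ hemi P, Real.arccos ⟪Q, R⟫ < ε} =
      ⋃ P₁ ∈ {P₁ ∈ sph d | Real.arccos ⟪P, P₁⟫ < ε}, hemi P₁ := by
  ext Q
  simp only [Set.mem_ofPred_eq, Set.mem_iUnion, exists_prop]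
  constructor
  · rintro ⟨hQ, R, ⟨hR, hPR⟩, h⟩
    obtain ⟨Y, hY, h1, h2⟩ := exists_sphere_swap P Q R hP hQ hR
    refine ⟨Y, ⟨hY, ?_⟩, hQ, ?_⟩
    · rwa [h1]
    · rwa [real_inner_comm, h2]
  · rintro ⟨P₁, ⟨hP₁, h⟩, hQ, hPQ⟩
    obtain ⟨Y, hY, h1, h2⟩ := exists_sphere_swap P Q P₁ hP hQ hP₁
    refine ⟨hQ, Y, ⟨hY, ?_⟩, ?_⟩
    · rwa [h1, real_inner_comm]
    · rwa [h2]
end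
end

section
/- Let W₁, W₂ be nonempty closed spherically convex subsets of S^d whose intersection X = W₁ ∩ W₂ is nonempty. Then X = 𝒞(W₁°, −(W₂°)); consequently X ∪ (−X) is the separation center set of W₁° and −(W₂°). -/
open scoped RealInnerProductSpace Pointwise

noncomputable section

/-- The cone over a closed spherically convex set, as a proper cone. -/
def coneOver {d : ℕ} (W : Set (E d)) (hcl : IsClosed W) (hcv : sphConvex W) :
    ProperCone ℝ (E d) where
  carrier := {x | x = 0 ∨ ‖x‖⁻¹ • x ∈ W}
  add_mem' := by
    rintro x y hx hy
    simp only [Set.mem_setOf_eq] at *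
    by_cases hx0 : x = 0
    · subst hx0; simpa using hy
    by_cases hy0 : y = 0
    · subst hy0; simpa using hx
    by_cases hxy : x + y = 0
    · exact Or.inl hxy
    right
    have hx' := hx.resolve_left hx0
    have hy' := hy.resolve_left hy0
    have nx : 0 < ‖x‖ := norm_pos_iff.2 hx0
    have ny : 0 < ‖y‖ := norm_pos_iff.2 hy0
    have ns : 0 < ‖x + y‖ := norm_pos_iff.2 hxy
    have h := hcv.2 _ hx' _ hy' (‖x‖ / (‖x‖ + ‖y‖))
      ⟨by positivity, by rw [div_le_one (by positivity)]; linarith⟩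
    have e : (‖x‖ / (‖x‖ + ‖y‖)) • ‖x‖⁻¹ • x + (1 - ‖x‖ / (‖x‖ + ‖y‖)) • ‖y‖⁻¹ • y
        = (‖x‖ + ‖y‖)⁻¹ • (x + y) := by
      rw [smul_smul, smul_smul, smul_add]
      congr 2 <;> field_simp <;> ring
    rw [e, norm_smul, smul_smul, norm_inv, Real.norm_of_nonneg (by positivity)] at h
    convert h using 2
    field_simp
  zero_mem' := Or.inl rfl
  smul_mem' := by
    rintro ⟨c, hc⟩ x hx
    rcases hx with hx | hx
    · left; subst hx; simp
    · rcases eq_or_lt_of_le hc with h | h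
      · left; subst h; exact zero_smul ℝ x
      · right
        change ‖c • x‖⁻¹ • c • x ∈ W
        rw [norm_smul, smul_smul, Real.norm_of_nonneg hc]
        convert hx using 2
        field_simp
  isClosed' := by
    change IsClosed {x : E d | x = 0 ∨ ‖x‖⁻¹ • x ∈ W}
    rw [← isOpen_compl_iff, isOpen_iff_mem_nhds]
    intro x hx
    simp only [Set.mem_compl_iff, Set.mem_setOf_eq, not_or] at hx
    have hc : ContinuousAt (fun y : E d => ‖y‖⁻¹ • y) x :=
      (continuousAt_id.norm.inv₀ (norm_ne_zero_iff.2 hx.1)).smul continuousAt_id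
    have h1 := hc.eventually (hcl.isOpen_compl.mem_nhds hx.2)
    have h2 : ∀ᶠ y in nhds x, y ≠ 0 := isOpen_ne.mem_nhds hx.1
    filter_upwards [h1, h2] with y hy1 hy2 h
    rcases h with h | h
    · exact hy2 h
    · exact hy1 h

theorem mem_of_bipolar {d : ℕ} {W : Set (E d)} (hW : W ⊆ sph d) (hcl : IsClosed W)
    (hcv : sphConvex W) {x : E d} (hx : x ∈ sph d) (h : ∀ Q ∈ polar W, 0 ≤ ⟪x, Q⟫) :
    x ∈ W := by
  by_contra hxW
  have hx1 : ‖x‖ = 1 := hx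
  have hxC : x ∉ coneOver W hcl hcv := by
    rintro (h0 | h0)
    · rw [h0] at hx1; simp at hx1
    · rw [hx1] at h0; simp at h0; exact hxW h0
  obtain ⟨y, hy, hxy⟩ := ProperCone.hyperplane_separation' _ hxC
  have hy0 : y ≠ 0 := by rintro rfl; simp at hxy
  have ny : 0 < ‖y‖ := norm_pos_iff.2 hy0
  have := h (‖y‖⁻¹ • y) ⟨by change ‖‖y‖⁻¹ • y‖ = 1; rw [norm_smul]; simp; field_simp, fun P hP => by
    have hP1 : ‖P‖ = 1 := hW hP
    have : 0 ≤ ⟪P, y⟫ := hy P (Or.inr (by rw [hP1]; simpa using hP))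
    rw [inner_smul_right]; positivity⟩
  rw [inner_smul_right] at this
  have h2 : ‖y‖⁻¹ * ⟪x, y⟫ < 0 := mul_neg_of_pos_of_neg (by positivity) hxy
  linarith

theorem ssc_swap {d : ℕ} (A B : Set (E d)) : ssc B A = -(ssc A B) := by
  ext x
  simp only [ssc, sph, Set.mem_setOf_eq, Set.mem_neg, norm_neg, inner_neg_left,
    Left.nonneg_neg_iff, Left.neg_nonpos_iff]
  tauto

/-- If `X = W₁ ∩ W₂` is nonempty, then `X = 𝒞(W₁°, −(W₂°))`; consequently
`X ∪ (−X)` is the separation center set of `W₁°` and `−(W₂°)`. -/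
theorem stmt_2 (d : ℕ) (W₁ W₂ : Set (E d)) (hW₁ : W₁ ⊆ sph d) (hW₂ : W₂ ⊆ sph d)
    (hne₁ : W₁.Nonempty) (hne₂ : W₂.Nonempty)
    (hcl₁ : IsClosed W₁) (hcl₂ : IsClosed W₂)
    (hcv₁ : sphConvex W₁) (hcv₂ : sphConvex W₂)
    (hX : (W₁ ∩ W₂).Nonempty) :
    W₁ ∩ W₂ = ssc (polar W₁) (-(polar W₂)) ∧
      (W₁ ∩ W₂) ∪ (-(W₁ ∩ W₂)) =
        ssc (polar W₁) (-(polar W₂)) ∪ ssc (-(polar W₂)) (polar W₁) := by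
  have key : W₁ ∩ W₂ = ssc (polar W₁) (-(polar W₂)) := by
    ext x
    constructor
    · rintro ⟨h1, h2⟩
      refine ⟨hW₁ h1, fun Q hQ => hQ.2 x h1, fun R hR => ?_⟩
      have := hR.2 x h2
      rw [inner_neg_right] at this
      linarith
    · rintro ⟨hx, h1, h2⟩
      refine ⟨mem_of_bipolar hW₁ hcl₁ hcv₁ hx h1, mem_of_bipolar hW₂ hcl₂ hcv₂ hx fun Q hQ => ?_⟩
      have := h2 (-Q) (by simpa using hQ)
      rw [inner_neg_right] at this
      linarith
  refine ⟨key, ?_⟩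
  rw [ssc_swap (polar W₁), ← key]
end
end

section
/- Let W₁, W₂ be nonempty closed spherically convex subsets of S^d. Then 𝒞(W₁,W₂) = W₁° if and only if −W₂ ⊆ W₁. -/
open scoped RealInnerProductSpace Pointwise

noncomputable section

theorem cone_sep {d : ℕ} (W : Set (E d)) (hW : W ⊆ sph d) (hne : W.Nonempty)
    (hcl : IsClosed W) (hcv : sphConvex W) (Q : E d) (hQ : Q ∈ sph d) (hQW : Q ∉ W) :
    ∃ P : E d, (∀ x ∈ W, 0 ≤ ⟪x, P⟫) ∧ ⟪P, Q⟫ < 0 := by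
  have hcomp : IsCompact W := by
    refine Metric.isCompact_of_isClosed_isBounded hcl ?_
    refine (Metric.isBounded_closedBall (x := (0 : E d)) (r := 1)).subset fun x hx => ?_
    have : ‖x‖ = 1 := hW hx
    simp [this]
  obtain ⟨w, hw⟩ := hne
  set K : Set (E d) := {y | ∃ x ∈ W, y = ‖y‖ • x} with hK
  have hKcl : IsClosed K := by
    haveI : CompactSpace W := isCompact_iff_compactSpace.mp hcomp
    have h1 : IsClosed {p : W × E d | p.2 = ‖p.2‖ • (p.1 : E d)} :=
      isClosed_eq (by fun_prop) (by fun_prop)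
    have h2 := isClosedMap_snd_of_compactSpace _ h1
    convert h2 using 1
    ext y
    simp [hK]
  have h0 : (0 : E d) ∈ K := ⟨w, hw, by simp⟩
  have hsm : ∀ c : ℝ, 0 ≤ c → ∀ y ∈ K, c • y ∈ K := by
    rintro c hc y ⟨x, hx, hy⟩
    refine ⟨x, hx, ?_⟩
    rw [norm_smul, Real.norm_of_nonneg hc, mul_smul, ← hy]
  have hadd : ∀ y ∈ K, ∀ z ∈ K, y + z ∈ K := by
    rintro y ⟨x, hx, hy⟩ z ⟨v, hv, hz⟩
    by_cases hs : ‖y‖ + ‖z‖ = 0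
    · have e1 : y = 0 := norm_eq_zero.mp (by linarith [norm_nonneg y, norm_nonneg z])
      have e2 : z = 0 := norm_eq_zero.mp (by linarith [norm_nonneg y, norm_nonneg z])
      simpa [e1, e2] using h0
    have hpos : 0 < ‖y‖ + ‖z‖ := lt_of_le_of_ne (by positivity) (Ne.symm hs)
    have key := hcv.2 x hx v hv (‖y‖ / (‖y‖ + ‖z‖))
      ⟨by positivity, by rw [div_le_one hpos]; linarith [norm_nonneg z]⟩
    set u := (‖y‖ / (‖y‖ + ‖z‖)) • x + (1 - ‖y‖ / (‖y‖ + ‖z‖)) • v with hu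
    have hyz : y + z = (‖y‖ + ‖z‖) • u := by
      rw [hu, smul_add, smul_smul, smul_smul, mul_div_cancel₀ _ hs, mul_sub,
        mul_div_cancel₀ _ hs, mul_one, add_sub_cancel_left, ← hy, ← hz]
    rw [hyz]
    refine hsm _ hpos.le _ ⟨_, key, ?_⟩
    by_cases h : u = 0
    · simp [h]
    · rw [smul_smul, mul_inv_cancel₀ (norm_ne_zero_iff.mpr h), one_smul]
  let C : ProperCone ℝ (E d) :=
    { carrier := K
      add_mem' := fun {a b} ha hb => hadd a ha b hb
      zero_mem' := h0
      smul_mem' := fun c y hy => hsm c.1 c.2 y hy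
      isClosed' := hKcl }
  have hQC : Q ∉ C := by
    rintro ⟨x, hx, h⟩
    rw [show ‖Q‖ = 1 from hQ, one_smul] at h
    exact hQW (h ▸ hx)
  obtain ⟨P, h1, h2⟩ := C.hyperplane_separation' hQC
  refine ⟨P, fun x hx => h1 x ⟨x, hx, ?_⟩, by rwa [real_inner_comm]⟩
  rw [show ‖x‖ = 1 from hW hx, one_smul]

/-- `𝒞(W₁,W₂) = W₁°` if and only if `−W₂ ⊆ W₁`. -/
theorem stmt_5 (d : ℕ) (W₁ W₂ : Set (E d)) (hW₁ : W₁ ⊆ sph d) (hW₂ : W₂ ⊆ sph d)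
    (hne₁ : W₁.Nonempty) (hne₂ : W₂.Nonempty)
    (hcl₁ : IsClosed W₁) (hcl₂ : IsClosed W₂)
    (hcv₁ : sphConvex W₁) (hcv₂ : sphConvex W₂) :
    ssc W₁ W₂ = polar W₁ ↔ -W₂ ⊆ W₁ := by
  constructor
  · intro h Q hQ
    have hQ' : -Q ∈ W₂ := hQ
    by_contra hn
    have hQs : Q ∈ sph d := by
      have : ‖-Q‖ = 1 := hW₂ hQ'
      rwa [norm_neg] at this
    obtain ⟨P, h1, h2⟩ := cone_sep W₁ hW₁ hne₁ hcl₁ hcv₁ Q hQs hn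
    have hP : P ≠ 0 := by
      rintro rfl
      simp at h2
    have hPn : 0 < ‖P‖ := norm_pos_iff.mpr hP
    have hmem : ‖P‖⁻¹ • P ∈ polar W₁ := by
      refine ⟨?_, fun x hx => ?_⟩
      · change ‖‖P‖⁻¹ • P‖ = 1
        rw [norm_smul, norm_inv, norm_norm, inv_mul_cancel₀ hPn.ne']
      · rw [real_inner_smul_right]
        exact mul_nonneg (by positivity) (h1 x hx)
    rw [← h] at hmem
    have h3 := hmem.2.2 _ hQ'
    rw [real_inner_smul_left, inner_neg_right] at h3
    have : 0 < ‖P‖⁻¹ * -⟪P, Q⟫ := mul_pos (by positivity) (by linarith)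
    linarith
  · intro h
    ext P
    constructor
    · rintro ⟨hs, h1, -⟩
      exact ⟨hs, fun x hx => by rw [real_inner_comm]; exact h1 x hx⟩
    · rintro ⟨hs, h1⟩
      refine ⟨hs, fun x hx => by rw [real_inner_comm]; exact h1 x hx, fun R hR => ?_⟩
      have := h1 (-R) (h (by simpa using hR))
      rw [inner_neg_left, real_inner_comm] at this
      linarith
end
end

section
/- Let W₁, W₂ be nonempty closed spherically convex subsets of S^d such that W₁ ∪ (−W₂) is hemispherical. Then (𝒞(W₁,W₂))° = s-conv(W₁ ∪ (−W₂)) and 𝒞(W₁,W₂) = (s-conv(W₁ ∪ (−W₂)))°. -/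
open scoped RealInnerProductSpace Pointwise

noncomputable section

theorem aux_compact_hull {d : ℕ} {W : Set (E d)} (hW : IsCompact W) :
    IsCompact (convexHull ℝ W) := by
  have hc : IsCompact ((fun p : (Fin (d + 2) → ℝ) × (Fin (d + 2) → E d) => ∑ i, p.1 i • p.2 i) ''
      ((stdSimplex ℝ (Fin (d + 2))) ×ˢ (Set.univ.pi fun _ => W))) := by
    apply IsCompact.image
    · exact (isCompact_stdSimplex ℝ (Fin (d + 2))).prod (isCompact_univ_pi fun _ => hW)
    · fun_prop
  convert hc using 1
  apply Set.Subset.antisymm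
  · intro x hx
    obtain ⟨ι, _, z, w, hz, hai, hw, hw1, rfl⟩ := eq_pos_convex_span_of_mem_convexHull hx
    have hne : W.Nonempty := convexHull_nonempty_iff.1 ⟨_, hx⟩
    obtain ⟨z0, hz0⟩ := hne
    have hcard : Fintype.card ι ≤ Fintype.card (Fin (d + 2)) := by
      have h1 := hai.card_le_finrank_succ
      have h2 := Submodule.finrank_le (vectorSpan ℝ (Set.range z))
      rw [finrank_euclideanSpace_fin] at h2
      rw [Fintype.card_fin]
      omega
    obtain ⟨e⟩ := Function.Embedding.nonempty_of_card_le hcard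
    refine ⟨(Function.extend e w 0, Function.extend e z (fun _ => z0)), ⟨⟨?_, ?_⟩, ?_⟩, ?_⟩
    · intro j
      by_cases h : ∃ i, e i = j
      · obtain ⟨i, rfl⟩ := h
        simpa [e.injective.extend_apply] using (hw i).le
      · simp [Function.extend_apply' _ _ _ h]
    · rw [← hw1]
      symm
      apply Fintype.sum_of_injective e e.injective
      · intro j hj
        simp [Function.extend_apply' _ _ _ (show ¬ ∃ i, e i = j by simpa using hj)]
      · intro i
        simp [e.injective.extend_apply]
    · intro j _
      by_cases h : ∃ i, e i = j
      · obtain ⟨i, rfl⟩ := h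
        simpa [e.injective.extend_apply] using hz ⟨i, rfl⟩
      · simpa [Function.extend_apply' _ _ _ h] using hz0
    · symm
      apply Fintype.sum_of_injective e e.injective
      · intro j hj
        simp [Function.extend_apply' _ _ _ (show ¬ ∃ i, e i = j by simpa using hj)]
      · intro i
        simp [e.injective.extend_apply]
  · rintro _ ⟨⟨w, z⟩, ⟨hw, hz⟩, rfl⟩
    exact mem_convexHull_of_exists_fintype w z hw.1 hw.2 (fun i => hz i trivial) rfl

theorem aux_sconv_iff {d : ℕ} {W : Set (E d)} {x : E d} :
    x ∈ sconv W ↔ ∃ k ∈ convexHull ℝ W, x = (‖k‖)⁻¹ • k := by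
  constructor
  · rintro ⟨n, P, l, hP, hl, h1, rfl⟩
    exact ⟨_, mem_convexHull_of_exists_fintype l P hl h1 hP rfl, rfl⟩
  · rintro ⟨k, hk, rfl⟩
    obtain ⟨ι, _, w, z, hw, hw1, hz, rfl⟩ := mem_convexHull_iff_exists_fintype.1 hk
    let e := (Fintype.equivFin ι).symm
    refine ⟨Fintype.card ι, z ∘ e, w ∘ e, fun i => hz _, fun i => hw _, ?_, ?_⟩
    · rw [← hw1]; exact Equiv.sum_comp e w
    · have : ∑ i, (w ∘ e) i • (z ∘ e) i = ∑ i, w i • z i :=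
        Equiv.sum_comp e (fun i => w i • z i)
      rw [this]

theorem aux_inner_hull {d : ℕ} {W : Set (E d)} {P : E d} (h : ∀ w ∈ W, 0 ≤ ⟪P, w⟫)
    {k : E d} (hk : k ∈ convexHull ℝ W) : 0 ≤ ⟪P, k⟫ := by
  have : convexHull ℝ W ⊆ {y | 0 ≤ innerSL ℝ P y} :=
    convexHull_min (fun w hw => h w hw)
      (convex_halfSpace_ge (innerSL ℝ P).toLinearMap.isLinear 0)
  exact this hk

theorem aux_inner_hull_neg {d : ℕ} {W : Set (E d)} {P : E d} (h : ∀ w ∈ W, ⟪P, w⟫ < 0)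
    {k : E d} (hk : k ∈ convexHull ℝ W) : ⟪P, k⟫ < 0 := by
  have : convexHull ℝ W ⊆ {y | innerSL ℝ P y < 0} :=
    convexHull_min (fun w hw => h w hw)
      (convex_halfSpace_lt (innerSL ℝ P).toLinearMap.isLinear 0)
  exact this hk

theorem aux_polar_sconv {d : ℕ} {W : Set (E d)} (hW : W ⊆ sph d) :
    polar (sconv W) = polar W := by
  ext Q
  constructor
  · rintro ⟨hQ, h⟩
    refine ⟨hQ, fun P hP => h P (aux_sconv_iff.2 ⟨P, subset_convexHull ℝ W hP, ?_⟩)⟩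
    have : ‖P‖ = 1 := hW hP
    simp [this]
  · rintro ⟨hQ, h⟩
    refine ⟨hQ, fun P hP => ?_⟩
    obtain ⟨k, hk, rfl⟩ := aux_sconv_iff.1 hP
    have := aux_inner_hull (P := Q) (fun w hw => by rw [real_inner_comm]; exact h w hw) hk
    rw [real_inner_smul_left, real_inner_comm]
    positivity

theorem aux_bipolar {d : ℕ} {W : Set (E d)} (hW : W ⊆ sph d) (hne : W.Nonempty)
    (hcl : IsClosed W) (hh : hemispherical W) : polar (polar W) = sconv W := by
  obtain ⟨P0, hP0, hd⟩ := hh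
  have hneg : ∀ w ∈ W, ⟪P0, w⟫ < 0 := by
    intro w hw
    by_contra hc
    have : w ∈ W ∩ hemi P0 := ⟨hw, hW hw, not_lt.1 hc⟩
    rw [hd] at this
    exact this
  have hk0 : ∀ k ∈ convexHull ℝ W, k ≠ 0 := by
    rintro k hk rfl
    simpa using aux_inner_hull_neg hneg hk
  have hcomp : IsCompact W := by
    apply (isCompact_sphere (0 : E d) 1).of_isClosed_subset hcl
    intro w hw
    have : ‖w‖ = 1 := hW hw
    simpa using this
  apply Set.Subset.antisymm
  · rintro x ⟨hx, h⟩
    have hx1 : ‖x‖ = 1 := hx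
    by_contra hxs
    have hxne : x ≠ 0 := by rintro rfl; simp at hx1
    let R : Set (E d) := (fun t : ℝ => t • x) '' Set.Ici 0
    have hRconv : Convex ℝ R :=
      (convex_Ici (0 : ℝ)).is_linear_image (LinearMap.toSpanSingleton ℝ (E d) x).isLinear
    have hRcl : IsClosed R := 
      (isClosedEmbedding_smul_left hxne).isClosedMap _ isClosed_Ici
    have hdisj : Disjoint (convexHull ℝ W) R := by
      rw [Set.disjoint_left]
      rintro _ hk ⟨t, ht, rfl⟩
      have h0 := hk0 _ hk
      have ht0 : 0 < t := lt_of_le_of_ne ht (by rintro rfl; simp at h0)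
      apply hxs
      refine aux_sconv_iff.2 ⟨_, hk, ?_⟩
      simp only [norm_smul, hx1, mul_one, Real.norm_eq_abs, abs_of_pos ht0, smul_smul]
      rw [inv_mul_cancel₀ ht0.ne', one_smul]
    obtain ⟨f, u, v, hf1, huv, hf2⟩ := geometric_hahn_banach_compact_closed
      (convex_convexHull ℝ W) (aux_compact_hull hcomp) hRconv hRcl hdisj
    have hv : v < 0 := by simpa using hf2 0 ⟨0, by simp, by simp⟩
    have hfx : 0 ≤ f x := by
      by_contra hc
      push Not at hc
      have := hf2 ((v / f x) • x) ⟨v / f x, (div_pos_of_neg_of_neg hv hc).le, rfl⟩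
      rw [map_smul, smul_eq_mul, div_mul_cancel₀ _ hc.ne] at this
      exact lt_irrefl _ this
    let y : E d := (InnerProductSpace.toDual ℝ (E d)).symm f
    have hy : ∀ z, ⟪y, z⟫ = f z := fun z => InnerProductSpace.toDual_symm_apply
    let p : E d := -y + u • x
    have hpx : ⟪p, x⟫ < 0 := by
      simp only [p, inner_add_left, inner_neg_left, real_inner_smul_left, hy,
        real_inner_self_eq_norm_sq, hx1]
      linarith
    have hpw : ∀ w ∈ W, 0 ≤ ⟪p, w⟫ := by
      intro w hw
      have h1 := hf1 w (subset_convexHull ℝ W hw)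
      have h2 : ⟪x, w⟫ ≤ 1 := by
        have := real_inner_le_norm x w
        rwa [hx1, show ‖w‖ = 1 from hW hw, mul_one] at this
      simp only [p, inner_add_left, inner_neg_left, real_inner_smul_left, hy]
      nlinarith
    have hp : p ≠ 0 := by intro hp; simp [hp] at hpx
    have hpn : 0 < ‖p‖ := norm_pos_iff.2 hp
    have hmem : (‖p‖)⁻¹ • p ∈ polar W := by
      refine ⟨?_, fun w hw => ?_⟩
      · show ‖(‖p‖)⁻¹ • p‖ = 1
        rw [norm_smul, norm_inv, norm_norm, inv_mul_cancel₀ hpn.ne']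
      · rw [real_inner_smul_right, real_inner_comm]
        have := hpw w hw
        positivity
    have := h _ hmem
    rw [real_inner_smul_left] at this
    have h3 := mul_neg_of_pos_of_neg (inv_pos.2 hpn) hpx
    linarith
  · intro x hx
    obtain ⟨k, hk, rfl⟩ := aux_sconv_iff.1 hx
    have hkn : 0 < ‖k‖ := norm_pos_iff.2 (hk0 k hk)
    refine ⟨?_, fun P hP => ?_⟩
    · show ‖(‖k‖)⁻¹ • k‖ = 1
      rw [norm_smul, norm_inv, norm_norm, inv_mul_cancel₀ hkn.ne']
    · have := aux_inner_hull (P := P) (fun w hw => by rw [real_inner_comm]; exact hP.2 w hw) hk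
      rw [real_inner_smul_right]
      positivity

theorem aux_ssc {d : ℕ} (W₁ W₂ : Set (E d)) : ssc W₁ W₂ = polar (W₁ ∪ (-W₂)) := by
  ext P
  constructor
  · rintro ⟨hP, h1, h2⟩
    refine ⟨hP, ?_⟩
    rintro Q (hQ | hQ)
    · rw [real_inner_comm]; exact h1 Q hQ
    · have := h2 (-Q) hQ
      rw [inner_neg_right] at this
      rw [real_inner_comm]; linarith
  · rintro ⟨hP, h⟩
    refine ⟨hP, fun Q hQ => ?_, fun Q hQ => ?_⟩
    · rw [real_inner_comm]; exact h Q (Or.inl hQ)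
    · have := h (-Q) (Or.inr (by simpa using hQ))
      rw [inner_neg_left] at this
      rw [real_inner_comm]; linarith

/-- `𝒞(W₁,W₂)° = s-conv(W₁ ∪ (−W₂))` and `𝒞(W₁,W₂) = (s-conv(W₁ ∪ (−W₂)))°`. -/
theorem stmt_6 (d : ℕ) (W₁ W₂ : Set (E d)) (hW₁ : W₁ ⊆ sph d) (hW₂ : W₂ ⊆ sph d)
    (hne₁ : W₁.Nonempty) (hne₂ : W₂.Nonempty)
    (hcl₁ : IsClosed W₁) (hcl₂ : IsClosed W₂)
    (hcv₁ : sphConvex W₁) (hcv₂ : sphConvex W₂)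
    (hhemi : hemispherical (W₁ ∪ (-W₂))) :
    polar (ssc W₁ W₂) = sconv (W₁ ∪ (-W₂)) ∧
      ssc W₁ W₂ = polar (sconv (W₁ ∪ (-W₂))) := by
  have hsub : W₁ ∪ (-W₂) ⊆ sph d := by
    rintro x (hx | hx)
    · exact hW₁ hx
    · have : ‖-x‖ = 1 := hW₂ hx
      rw [norm_neg] at this
      exact this
  have hcl : IsClosed (W₁ ∪ (-W₂)) := hcl₁.union (hcl₂.preimage continuous_neg)
  rw [aux_ssc, aux_polar_sconv hsub]
  exact ⟨aux_bipolar hsub (hne₁.mono Set.subset_union_left) hcl hhemi, rfl⟩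
end
end

section
/- Let W₁,…,W_m and Y₁,…,Y_m be nonempty closed spherically convex subsets of S^d and suppose X = W_i ∩ Y_i for every i ∈ {1,…,m}, with X nonempty. Then (1) X = 𝒞(⋃_{i=1}^m W_i°, ⋃_{i=1}^m (−(Y_i°))); and (2) if moreover ⋃_{i=1}^m W_i° and ⋃_{i=1}^m (−(Y_i°)) are hemispherical, then X = 𝒞(s-conv(⋃_{i=1}^m W_i°), s-conv(⋃_{i=1}^m (−(Y_i°)))). -/
open scoped RealInnerProductSpace Pointwise

noncomputable section

/-- Bipolar theorem for closed spherically convex sets. -/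
theorem bipolar_aux {d : ℕ} (W : Set (E d)) (hs : W ⊆ sph d) (hne : W.Nonempty)
    (hcl : IsClosed W) (hcv : sphConvex W) (P : E d) (hP : ‖P‖ = 1)
    (h : ∀ Q ∈ polar W, 0 ≤ ⟪P, Q⟫) : P ∈ W := by
  have hcomp : IsCompact W := by
    apply IsCompact.of_isClosed_subset (isCompact_sphere (0 : E d) 1) hcl
    intro x hx
    simpa using (show ‖x‖ = 1 from hs hx)
  let K : Set (E d) := {x | ∃ w ∈ W, x = ‖x‖ • w}
  have hKcl : IsClosed K := by
    haveI : CompactSpace W := isCompact_iff_compactSpace.mp hcomp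
    have h1 : IsClosed {p : W × E d | p.2 = ‖p.2‖ • (p.1 : E d)} :=
      isClosed_eq (by fun_prop) (by fun_prop)
    have h2 := isClosedMap_snd_of_compactSpace (X := W) (Y := E d) _ h1
    convert h2 using 1
    ext x
    constructor
    · rintro ⟨w, hw, hx⟩
      exact ⟨(⟨w, hw⟩, x), hx, rfl⟩
    · rintro ⟨⟨w, y⟩, hy, rfl⟩
      exact ⟨w, w.2, hy⟩
  have hsm : ∀ r : ℝ, 0 ≤ r → ∀ w ∈ W, r • w ∈ K := by
    intro r hr w hw
    refine ⟨w, hw, ?_⟩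
    have : ‖w‖ = 1 := hs hw
    rw [norm_smul, this, Real.norm_of_nonneg hr, mul_one]
  have hKcv : Convex ℝ K := by
    rintro x ⟨w, hw, hx⟩ y ⟨v, hv, hy⟩ a b ha hb hab
    have ha' : 0 ≤ a * ‖x‖ := by positivity
    have hb' : 0 ≤ b * ‖y‖ := by positivity
    have e1 : a • x + b • y = (a * ‖x‖) • w + (b * ‖y‖) • v := by
      rw [mul_smul, mul_smul, ← hx, ← hy]
    rw [e1]
    generalize a * ‖x‖ = p at *
    generalize b * ‖y‖ = q at *
    by_cases hpq : p + q = 0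
    · have : p = 0 := by linarith
      have : q = 0 := by linarith
      subst_vars
      simpa using hsm 0 le_rfl w hw
    · have hpos : 0 < p + q := lt_of_le_of_ne (by linarith) (Ne.symm hpq)
      have h3 := hcv.2 w hw v hv (p / (p + q)) ⟨by positivity, by
        rw [div_le_one hpos]; linarith⟩
      have e2 : p • w + q • v
          = (p + q) • ((p / (p + q)) • w + (1 - p / (p + q)) • v) := by
        rw [smul_add, smul_smul, smul_smul]
        congr 2 <;> field_simp
        ring
      rw [e2]
      generalize (p / (p + q)) • w + (1 - p / (p + q)) • v = z at *
      by_cases hz : z = 0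
      · subst hz
        simpa using hsm 0 le_rfl w hw
      · have h4 := hsm ((p + q) * ‖z‖) (by positivity) _ h3
        rwa [smul_smul, mul_assoc, mul_inv_cancel₀ (norm_ne_zero_iff.mpr hz), mul_one] at h4
  by_contra hPW
  have hPK : P ∉ K := by
    rintro ⟨w, hw, e⟩
    rw [hP, one_smul] at e
    exact hPW (e ▸ hw)
  obtain ⟨f, u, hfP, hfK⟩ := geometric_hahn_banach_point_closed hKcv hKcl hPK
  obtain ⟨w0, hw0⟩ := hne
  have hu : u < 0 := by simpa using hfK _ (hsm 0 le_rfl w0 hw0)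
  have hf : ∀ w ∈ W, 0 ≤ f w := by
    intro w hw
    by_contra hneg
    push Not at hneg
    have h5 := hfK _ (hsm (u / f w) (div_nonneg_of_nonpos hu.le hneg.le) w hw)
    rw [map_smul, smul_eq_mul, div_mul_cancel₀ _ hneg.ne] at h5
    exact lt_irrefl _ h5
  set q := (InnerProductSpace.toDual ℝ (E d)).symm f with hq
  have hqi : ∀ x, ⟪x, q⟫ = f x := by
    intro x
    rw [real_inner_comm, hq, InnerProductSpace.toDual_symm_apply]
  have hq0 : q ≠ 0 := by
    intro h0
    have := hqi P
    rw [h0, inner_zero_right] at this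
    linarith
  have hqn : 0 < ‖q‖⁻¹ := inv_pos.mpr (norm_pos_iff.mpr hq0)
  have := h (‖q‖⁻¹ • q) ⟨by
      show ‖‖q‖⁻¹ • q‖ = 1
      rw [norm_smul, norm_inv, norm_norm, inv_mul_cancel₀ (norm_ne_zero_iff.mpr hq0)], by
      intro w hw
      rw [inner_smul_right, hqi]
      exact mul_nonneg hqn.le (hf w hw)⟩
  rw [inner_smul_right, hqi] at this
  nlinarith

theorem ssc_sconv_aux {d : ℕ} (A B : Set (E d)) (hA : A ⊆ sph d) (hB : B ⊆ sph d) :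
    ssc A B = ssc (sconv A) (sconv B) := by
  have sub : ∀ A : Set (E d), A ⊆ sph d → A ⊆ sconv A := by
    intro A hA x hx
    have : ‖x‖ = 1 := hA hx
    exact ⟨1, fun _ => x, fun _ => 1, fun _ => hx, fun _ => zero_le_one, by simp, by simp [this]⟩
  ext P
  constructor
  · rintro ⟨hP, h1, h2⟩
    refine ⟨hP, ?_, ?_⟩
    · rintro Q ⟨n, p, l, hp, hl, -, rfl⟩
      rw [inner_smul_right, inner_sum]
      refine mul_nonneg (by positivity) (Finset.sum_nonneg fun i _ => ?_)
      rw [inner_smul_right]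
      exact mul_nonneg (hl i) (h1 _ (hp i))
    · rintro Q ⟨n, p, l, hp, hl, -, rfl⟩
      rw [inner_smul_right, inner_sum]
      refine mul_nonpos_of_nonneg_of_nonpos (by positivity) (Finset.sum_nonpos fun i _ => ?_)
      rw [inner_smul_right]
      exact mul_nonpos_of_nonneg_of_nonpos (hl i) (h2 _ (hp i))
  · rintro ⟨hP, h1, h2⟩
    exact ⟨hP, fun Q hQ => h1 Q (sub A hA hQ), fun Q hQ => h2 Q (sub B hB hQ)⟩

/-- If `X = W_i ∩ Y_i` for all `i`, then (1) `X = 𝒞(⋃ᵢ W_i°, ⋃ᵢ (−Y_i°))`, and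
(2) if the two unions are hemispherical,
`X = 𝒞(s-conv(⋃ᵢ W_i°), s-conv(⋃ᵢ (−Y_i°)))`. -/
theorem stmt_9 (d m : ℕ) (hm : 0 < m)
    (W Y : Fin m → Set (E d))
    (hWs : ∀ i, W i ⊆ sph d) (hYs : ∀ i, Y i ⊆ sph d)
    (hWne : ∀ i, (W i).Nonempty) (hYne : ∀ i, (Y i).Nonempty)
    (hWcl : ∀ i, IsClosed (W i)) (hYcl : ∀ i, IsClosed (Y i))
    (hWcv : ∀ i, sphConvex (W i)) (hYcv : ∀ i, sphConvex (Y i))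
    (X : Set (E d)) (hXne : X.Nonempty) (hX : ∀ i, X = W i ∩ Y i) :
    X = ssc (⋃ i, polar (W i)) (⋃ i, -(polar (Y i))) ∧
      (hemispherical (⋃ i, polar (W i)) → hemispherical (⋃ i, -(polar (Y i))) →
        X = ssc (sconv (⋃ i, polar (W i))) (sconv (⋃ i, -(polar (Y i))))) := by
  have main : X = ssc (⋃ i, polar (W i)) (⋃ i, -(polar (Y i))) := by
    ext P
    constructor
    · intro hPX
      have hm' : ∀ i, P ∈ W i ∧ P ∈ Y i := fun i => by
        have := hX i ▸ hPX
        exact this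
      refine ⟨hWs ⟨0, hm⟩ (hm' _).1, ?_, ?_⟩
      · intro Q hQ
        obtain ⟨i, hi⟩ := Set.mem_iUnion.mp hQ
        exact hi.2 P (hm' i).1
      · intro Q hQ
        obtain ⟨i, hi⟩ := Set.mem_iUnion.mp hQ
        have := (Set.mem_neg.mp hi).2 P (hm' i).2
        rw [inner_neg_right] at this
        linarith
    · rintro ⟨hP, h1, h2⟩
      rw [hX ⟨0, hm⟩]
      refine ⟨bipolar_aux _ (hWs _) (hWne _) (hWcl _) (hWcv _) P hP fun Q hQ =>
        h1 Q (Set.mem_iUnion.mpr ⟨_, hQ⟩),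
        bipolar_aux _ (hYs _) (hYne _) (hYcl _) (hYcv _) P hP fun Q hQ => ?_⟩
      have := h2 (-Q) (Set.mem_iUnion.mpr ⟨_, Set.neg_mem_neg.mpr hQ⟩)
      rw [inner_neg_right] at this
      linarith
  refine ⟨main, fun _ _ => main.trans (ssc_sconv_aux _ _ ?_ ?_)⟩
  · exact Set.iUnion_subset fun i Q hQ => hQ.1
  · refine Set.iUnion_subset fun i Q hQ => ?_
    have : ‖-Q‖ = 1 := (Set.mem_neg.mp hQ).1
    rwa [norm_neg] at this
end
end

section
/- Let m ≥ 2 and let P₁,…,P_m be pairwise distinct points of S^d. Then the set {P₁,…,P_m} is not hemispherical if and only if the separation center set of P₁,…,P_m is dense in S^d. -/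
open scoped RealInnerProductSpace Pointwise

noncomputable section

/-- `Q` is a separation center of the points `P₁, …, P_m`. -/
def isSepCenter {d m : ℕ} (P : Fin m → E d) (Q : E d) : Prop :=
  Q ∈ sph d ∧ ∃ I J : Set (Fin m), I.Nonempty ∧ J.Nonempty ∧ I ∩ J = ∅ ∧
    I ∪ J = Set.univ ∧ (∀ i ∈ I, 0 ≤ ⟪Q, P i⟫) ∧ ∀ j ∈ J, ⟪Q, P j⟫ ≤ 0

/-- `{P₁,…,P_m}` is not hemispherical iff the separation center set of `P₁,…,P_m`
is dense in `S^d`. -/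
theorem stmt_14 (d m : ℕ) (hm : 2 ≤ m) (P : Fin m → E d)
    (hP : ∀ i, P i ∈ sph d) (hinj : Function.Injective P) :
    ¬ hemispherical (Set.range P) ↔ sph d ⊆ closure {Q | isSepCenter P Q} := by
  constructor
  · intro h Q hQ
    apply subset_closure
    have key : ∀ R ∈ sph d, ∃ i, 0 ≤ ⟪R, P i⟫ := by
      intro R hR
      by_contra hc
      push Not at hc
      refine h ⟨R, hR, ?_⟩
      ext x
      simp only [Set.mem_inter_iff, Set.mem_range, Set.mem_empty_iff_false, iff_false, not_and]
      rintro ⟨i, rfl⟩ hx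
      exact absurd hx.2 (not_le.mpr (hc i))
    have main : ∀ i j, i ≠ j → 0 ≤ ⟪Q, P i⟫ → ⟪Q, P j⟫ ≤ 0 → isSepCenter P Q := by
      intro i j hij hi hj
      refine ⟨hQ, {k | 0 < ⟪Q, P k⟫ ∨ k = i}, {k | 0 < ⟪Q, P k⟫ ∨ k = i}ᶜ, ⟨i, Or.inr rfl⟩,
        ⟨j, ?_⟩, Set.inter_compl_self _, Set.union_compl_self _, ?_, ?_⟩
      · rintro (h1 | h1)
        · exact absurd hj (not_le.mpr h1)
        · exact hij h1.symm
      · rintro k (h1 | h1)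
        · exact h1.le
        · rw [h1]; exact hi
      · intro k hk
        by_contra hc
        exact hk (Or.inl (not_le.mp hc))
    obtain ⟨i, hi⟩ := key Q hQ
    obtain ⟨j, hj⟩ := key (-Q) (by simpa [sph] using hQ)
    have hj' : ⟪Q, P j⟫ ≤ 0 := by
      rw [inner_neg_left] at hj; linarith
    by_cases hij : i = j
    · subst hij
      haveI : Nontrivial (Fin m) := Fin.nontrivial_iff_two_le.mpr hm
      obtain ⟨k, hk⟩ := exists_ne i
      rcases le_total 0 ⟪Q, P k⟫ with h1 | h1
      · exact main k i hk h1 hj'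
      · exact main i k hk.symm hi h1
    · exact main i j hij hi hj'
  · rintro h ⟨R, hR, hW⟩
    have hneg : ∀ i, ⟪R, P i⟫ < 0 := by
      intro i
      by_contra hc
      have : P i ∈ Set.range P ∩ hemi R := ⟨⟨i, rfl⟩, hP i, not_lt.mp hc⟩
      rw [hW] at this
      exact this
    have hopen : IsOpen {x : E d | ∀ i, ⟪x, P i⟫ < 0} := by
      simp only [Set.setOf_forall]
      exact isOpen_iInter_of_finite fun i =>
        isOpen_lt (by fun_prop) continuous_const
    obtain ⟨Q, hQ, -, I, J, ⟨i, hi⟩, -, -, -, hI, -⟩ :=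
      mem_closure_iff.mp (h hR) _ hopen hneg
    exact absurd (hI i hi) (not_le.mpr (hQ i))
end
end
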